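/- arXiv:2410.00276 — 3 statements merged into one kernel-verified Lean document; each statement's English description precedes it below -/
import Mathlib

section
/- Let R be a nontrivial ring and let (X, d) be a chain complex of pointed sets, with associated complex of free R-modules Mₙ = (Xₙ \ {∗}) →₀ R and differentials Dₙ determined by Dₙ(e_x) = e_{dₙ x} if dₙ x ≠ ∗ and 0 otherwise. Then for each n, ker Dₙ = range Dₙ₊₁ if and only if Hₙ(X) = {∗}. In particular, the complex of free R-modules is exact if and only if the chain complex of pointed sets is exact. -/
/-- The data of a (possible) chain complex of pointed sets: a ℤ-indexed family of types
`X n` with basepoints `pt n` and differentials `d n : X n → X (n-1)`. -/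
structure PreCC where
  X : ℤ → Type
  pt : ∀ n, X n
  d : ∀ n, X n → X (n - 1)

/-- `C` is a chain complex of pointed sets: the differentials are pointed, injective away
from the basepoint, and consecutive differentials compose to the constant map at the
basepoint. -/
def PreCC.IsComplex (C : PreCC) : Prop :=
  (∀ n, C.d n (C.pt n) = C.pt (n - 1)) ∧
  (∀ n, ∀ a b : C.X n, C.d n a = C.d n b → C.d n a ≠ C.pt (n - 1) → a = b) ∧
  (∀ n, ∀ x : C.X n, C.d (n - 1) (C.d n x) = C.pt (n - 1 - 1))

/-- Transport along an equality of indices. -/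
def PreCC.castX (C : PreCC) {m n : ℤ} (h : m = n) : C.X m → C.X n :=
  fun x => h ▸ x

/-- Membership in the `n`-th homology `Hₙ(C) = {x ∈ Xₙ : x ≠ ∗, dₙ x = ∗, x ∉ dₙ₊₁(Xₙ₊₁)} ∪ {∗}`. -/
def Hmem (C : PreCC) (n : ℤ) (x : C.X n) : Prop :=
  x = C.pt n ∨ (x ≠ C.pt n ∧ C.d n x = C.pt (n - 1) ∧
    ∀ z : C.X (n + 1), C.castX (show n + 1 - 1 = n by omega) (C.d (n + 1) z) ≠ x)

/-- The `n`-th homology of `C`, as a pointed set. -/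
def HT (C : PreCC) (n : ℤ) : Type := {x : C.X n // Hmem C n x}

/-- The basepoint of the `n`-th homology. -/
def Hpt (C : PreCC) (n : ℤ) : HT C n := ⟨C.pt n, Or.inl rfl⟩

/-- A chain map `C → D`: a family of pointed maps, each injective away from the
basepoint, commuting with the differentials. -/
def IsChainMap (C D : PreCC) (f : ∀ n, C.X n → D.X n) : Prop :=
  (∀ n, f n (C.pt n) = D.pt n) ∧
  (∀ n, ∀ a b : C.X n, f n a = f n b → f n a ≠ D.pt n → a = b) ∧
  (∀ n, ∀ x : C.X n, f (n - 1) (C.d n x) = D.d n (f n x))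

open Classical in
/-- The induced map on homology: `x ↦ fₙ(x)` if `fₙ(x) ∈ Hₙ(D)`, and `∗` otherwise. -/
noncomputable def Hmap (C D : PreCC) (f : ∀ n, C.X n → D.X n) (n : ℤ) :
    HT C n → HT D n :=
  fun x => if h : Hmem D n (f n x.1) then ⟨f n x.1, h⟩ else Hpt D n

/-- A chain complex of pointed sets is exact if all its homology pointed sets are trivial. -/
def PreCC.Exact (C : PreCC) : Prop :=
  ∀ n, ∀ x : C.X n, Hmem C n x → x = C.pt n

open Classical in
/-- The differential of the associated complex of free `R`-modules
`Mₙ = (Xₙ \ {∗}) →₀ R`, determined on basis vectors by `Dₙ(e_x) = e_{dₙ x}` if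
`dₙ x ≠ ∗` and `Dₙ(e_x) = 0` if `dₙ x = ∗`. -/
noncomputable def Dmap (C : PreCC) (R : Type) [Ring R] (n : ℤ) :
    ({x : C.X n // x ≠ C.pt n} →₀ R) →ₗ[R]
      ({x : C.X (n - 1) // x ≠ C.pt (n - 1)} →₀ R) :=
  Finsupp.lsum ℕ fun x : {x : C.X n // x ≠ C.pt n} =>
    if h : C.d n x.1 ≠ C.pt (n - 1) then Finsupp.lsingle ⟨C.d n x.1, h⟩ else 0

/-- Transport of the free modules along an equality of indices. -/
noncomputable def castM (C : PreCC) (R : Type) [Ring R] {m n : ℤ} (h : m = n) :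
    ({x : C.X m // x ≠ C.pt m} →₀ R) ≃ₗ[R] ({x : C.X n // x ≠ C.pt n} →₀ R) := by
  subst h; exact LinearEquiv.refl R _

theorem d_castX (C : PreCC) {m n : ℤ} (h : m = n) (y : C.X m)
    (hy : C.d m y = C.pt (m - 1)) : C.d n (C.castX h y) = C.pt (n - 1) := by
  subst h; exact hy

theorem Dmap_single_ne (C : PreCC) (R : Type) [Ring R] (n : ℤ)
    (x : {x : C.X n // x ≠ C.pt n}) (r : R) (h : C.d n x.1 ≠ C.pt (n - 1)) :
    Dmap C R n (Finsupp.single x r) = Finsupp.single ⟨C.d n x.1, h⟩ r := by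
  simp [Dmap, h]

theorem Dmap_single_eq (C : PreCC) (R : Type) [Ring R] (n : ℤ)
    (x : {x : C.X n // x ≠ C.pt n}) (r : R) (h : C.d n x.1 = C.pt (n - 1)) :
    Dmap C R n (Finsupp.single x r) = 0 := by
  simp [Dmap, h]

theorem Dmap_apply_d (C : PreCC) (hC : C.IsComplex) (R : Type) [Ring R] (n : ℤ)
    (x : {x : C.X n // x ≠ C.pt n}) (h : C.d n x.1 ≠ C.pt (n - 1))
    (v : {x : C.X n // x ≠ C.pt n} →₀ R) :
    Dmap C R n v ⟨C.d n x.1, h⟩ = v x := by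
  classical
  induction v using Finsupp.induction_linear with
  | zero => simp
  | add f g hf hg => rw [map_add, Finsupp.add_apply, Finsupp.add_apply, hf, hg]
  | single y r =>
    by_cases hy : C.d n y.1 = C.pt (n - 1)
    · rw [Dmap_single_eq C R n y r hy, Finsupp.single_apply, if_neg]
      · rfl
      · rintro rfl; exact h hy
    · rw [Dmap_single_ne C R n y r hy, Finsupp.single_apply, Finsupp.single_apply]
      congr 1
      apply propext
      constructor
      · intro e
        exact Subtype.ext (hC.2.1 n _ _ (congrArg Subtype.val e) hy)
      · rintro rfl; rfl

theorem mem_ker_Dmap (C : PreCC) (hC : C.IsComplex) (R : Type) [Ring R] (n : ℤ)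
    (v : {x : C.X n // x ≠ C.pt n} →₀ R) :
    v ∈ LinearMap.ker (Dmap C R n) ↔ ∀ x, v x ≠ 0 → C.d n x.1 = C.pt (n - 1) := by
  rw [LinearMap.mem_ker]
  constructor
  · intro hv x hx
    by_contra h
    apply hx
    rw [← Dmap_apply_d C hC R n x h v, hv]; rfl
  · intro H
    rw [← Finsupp.sum_single v, Finsupp.sum, map_sum]
    refine Finset.sum_eq_zero fun x hx => ?_
    exact Dmap_single_eq C R n x _ (H x (Finsupp.mem_support_iff.1 hx))

theorem Dmap_single_apply_zero (C : PreCC) (R : Type) [Ring R] (n : ℤ)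
    (y : {x : C.X n // x ≠ C.pt n}) (r : R) (x : {x : C.X (n - 1) // x ≠ C.pt (n - 1)})
    (h : C.d n y.1 ≠ x.1) : Dmap C R n (Finsupp.single y r) x = 0 := by
  classical
  by_cases hy : C.d n y.1 = C.pt (n - 1)
  · rw [Dmap_single_eq C R n y r hy]; rfl
  · rw [Dmap_single_ne C R n y r hy, Finsupp.single_apply, if_neg]
    intro e
    exact h (congrArg Subtype.val e)

theorem mem_range_Dmap (C : PreCC) (hC : C.IsComplex) (R : Type) [Ring R] (m n : ℤ) (e : m - 1 = n)
    (v : {x : C.X n // x ≠ C.pt n} →₀ R) :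
    v ∈ LinearMap.range ((castM C R e).toLinearMap.comp (Dmap C R m)) ↔
      ∀ x, v x ≠ 0 → ∃ z, C.castX e (C.d m z) = x.1 := by
  classical
  subst e
  change v ∈ LinearMap.range (Dmap C R m) ↔ ∀ x, v x ≠ 0 → ∃ z, C.d m z = x.1
  constructor
  · rintro ⟨w, rfl⟩ x hx
    by_contra hne
    push Not at hne
    apply hx
    rw [← Finsupp.sum_single w, Finsupp.sum, map_sum, Finsupp.finsetSum_apply]
    exact Finset.sum_eq_zero fun y _ => Dmap_single_apply_zero C R m y _ x (hne y.1)
  · intro H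
    rw [← Finsupp.sum_single v, Finsupp.sum]
    refine Submodule.sum_mem _ fun x hx => ?_
    obtain ⟨z, hz⟩ := H x (Finsupp.mem_support_iff.1 hx)
    have hz1 : C.d m z ≠ C.pt (m - 1) := by rw [hz]; exact x.2
    have hz2 : z ≠ C.pt m := by
      rintro rfl
      exact hz1 (hC.1 m)
    refine ⟨Finsupp.single ⟨z, hz2⟩ (v x), ?_⟩
    rw [Dmap_single_ne C R m ⟨z, hz2⟩ _ hz1]
    congr 1
    exact Subtype.ext hz

theorem stmt3_aux (R : Type) [Ring R] [Nontrivial R] (C : PreCC) (hC : C.IsComplex) (n : ℤ) :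
    LinearMap.ker (Dmap C R n) =
          LinearMap.range ((castM C R (show n + 1 - 1 = n by omega)).toLinearMap.comp
            (Dmap C R (n + 1))) ↔
        ∀ x : C.X n, Hmem C n x → x = C.pt n := by
  classical
  constructor
  · rintro H x (hx | ⟨hx, hd, hz⟩)
    · exact hx
    exfalso
    have h1 : (Finsupp.single (⟨x, hx⟩ : {x : C.X n // x ≠ C.pt n}) (1 : R)) ∈
        LinearMap.ker (Dmap C R n) := Dmap_single_eq C R n ⟨x, hx⟩ 1 hd
    rw [H, mem_range_Dmap C hC] at h1
    obtain ⟨z, e⟩ := h1 ⟨x, hx⟩ (by simp)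
    exact hz z e
  · intro H
    ext v
    rw [mem_range_Dmap C hC, mem_ker_Dmap C hC]
    refine forall_congr' fun x => imp_congr_right fun _ => ?_
    constructor
    · intro hd
      by_contra hne
      push Not at hne
      exact x.2 (H x.1 (Or.inr ⟨x.2, hd, hne⟩))
    · rintro ⟨z, hz⟩
      rw [← hz]
      exact d_castX C _ _ (hC.2.2 (n + 1) z)

/-- For a nontrivial ring `R` and a chain complex of pointed sets `C`: for each `n`,
`ker Dₙ = range Dₙ₊₁` if and only if `Hₙ(C) = {∗}`; in particular the complex of free
`R`-modules is exact if and only if the chain complex of pointed sets is exact. -/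
theorem stmt3 (R : Type) [Ring R] [Nontrivial R] (C : PreCC) (hC : C.IsComplex) :
    (∀ n : ℤ,
      (LinearMap.ker (Dmap C R n) =
          LinearMap.range ((castM C R (show n + 1 - 1 = n by omega)).toLinearMap.comp
            (Dmap C R (n + 1))) ↔
        ∀ x : C.X n, Hmem C n x → x = C.pt n)) ∧
    ((∀ n : ℤ,
        LinearMap.ker (Dmap C R n) =
          LinearMap.range ((castM C R (show n + 1 - 1 = n by omega)).toLinearMap.comp
            (Dmap C R (n + 1)))) ↔ C.Exact) := by
  have key := stmt3_aux R C hC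
  exact ⟨key, forall_congr' key⟩
end

section
/- (Functoriality of homology.) Let X, Y, Z be chain complexes of pointed sets and f : X → Y, g : Y → Z chain maps. Then for every n, Hₙ(id_X) = id on Hₙ(X), and Hₙ(g ∘ f) = Hₙ(g) ∘ Hₙ(f), where g ∘ f is the levelwise composite chain map and Hₙ(−) denotes the induced map on homology. -/
theorem castX_comm (Y Z : PreCC) (g : ∀ n, Y.X n → Z.X n) {m n : ℤ} (h : m = n) (y : Y.X m) :
    g n (Y.castX h y) = Z.castX h (g m y) := by
  subst h; rfl

theorem Hmap_pos (C D : PreCC) (f : ∀ n, C.X n → D.X n) (n : ℤ) (x : HT C n)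
    (h : Hmem D n (f n x.1)) : Hmap C D f n x = ⟨f n x.1, h⟩ := dif_pos h

theorem Hmap_neg (C D : PreCC) (f : ∀ n, C.X n → D.X n) (n : ℤ) (x : HT C n)
    (h : ¬ Hmem D n (f n x.1)) : Hmap C D f n x = Hpt D n := dif_neg h

/-- **Functoriality of homology.** For chain maps `f : X → Y` and `g : Y → Z` of chain
complexes of pointed sets, `Hₙ(id) = id` and `Hₙ(g ∘ f) = Hₙ(g) ∘ Hₙ(f)` for all `n`. -/
theorem stmt9 (X Y Z : PreCC) (hX : X.IsComplex) (hY : Y.IsComplex) (hZ : Z.IsComplex)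
    (f : ∀ n, X.X n → Y.X n) (hf : IsChainMap X Y f)
    (g : ∀ n, Y.X n → Z.X n) (hg : IsChainMap Y Z g) (n : ℤ) :
    Hmap X X (fun _ x => x) n = id ∧
    Hmap X Z (fun n => g n ∘ f n) n = Hmap Y Z g n ∘ Hmap X Y f n := by
  constructor
  · funext x
    exact Hmap_pos X X (fun _ x => x) n x x.2
  · funext x
    change _ = Hmap Y Z g n (Hmap X Y f n x)
    by_cases h : Hmem Y n (f n x.1)
    · rw [Hmap_pos X Y f n x h]
      rfl
    · rw [Hmap_neg X Y f n x h]
      have hp : g n (Hpt Y n).1 = Z.pt n := hg.1 n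
      have hr : Hmem Z n (g n (Hpt Y n).1) := Or.inl hp
      rw [Hmap_pos Y Z g n _ hr]
      have key : Hmem Z n (g n (f n x.1)) → g n (f n x.1) = Z.pt n := by
        rintro (h1 | ⟨_, _, h3⟩)
        · exact h1
        · exfalso
          apply h
          by_cases hfx : f n x.1 = Y.pt n
          · exact Or.inl hfx
          · refine Or.inr ⟨hfx, ?_, ?_⟩
            · rw [← hf.2.2]
              rcases x.2 with hx | ⟨_, hx, _⟩
              · exact absurd (by rw [hx]; exact hf.1 n) hfx
              · rw [hx]; exact hf.1 _
            · intro z hz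
              apply h3 (g (n + 1) z)
              rw [← hg.2.2, ← castX_comm, hz]
      by_cases h2 : Hmem Z n (g n (f n x.1))
      · rw [Hmap_pos X Z (fun n => g n ∘ f n) n x h2]
        exact Subtype.ext ((key h2).trans hp.symm)
      · rw [Hmap_neg X Z (fun n => g n ∘ f n) n x h2]
        exact Subtype.ext hp.symm
end

section
/- Let f : X → Y be a chain map of chain complexes of pointed sets with each fₙ injective. Define the cokernel complex Q by Qₙ = (Yₙ \ fₙ(Xₙ)) ∪ {∗} with differential d^Q(y) = d^Y(y) if d^Y(y) ∉ fₙ₋₁(Xₙ₋₁), and d^Q(y) = ∗ otherwise. Then Q is a chain complex of pointed sets (its differentials are pointed, injective away from the basepoint, and consecutive differentials compose to the constant map at ∗), and f is a quasi-isomorphism if and only if Q is exact. -/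
/-- Differential landing in degree `n`. -/
def DD (C : PreCC) (n : ℤ) (z : C.X (n + 1)) : C.X n :=
  C.castX (show n + 1 - 1 = n by omega) (C.d (n + 1) z)

theorem castX_pt (C : PreCC) {m n : ℤ} (h : m = n) (x : C.X m) :
    C.castX h x = C.pt n ↔ x = C.pt m := by
  subst h; exact Iff.rfl

theorem castX_inj (C : PreCC) {m n : ℤ} (h : m = n) (x y : C.X m) :
    C.castX h x = C.castX h y ↔ x = y := by
  subst h; exact Iff.rfl

theorem castX_d (C : PreCC) (hC : C.IsComplex) {m n : ℤ} (h : m - 1 = n) (x : C.X m) :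
    C.d n (C.castX h (C.d m x)) = C.pt (n - 1) := by
  subst h; exact hC.2.2 _ _

theorem castX_f (C D : PreCC) (f : ∀ n, C.X n → D.X n) {m n : ℤ} (h : m = n) (x : C.X m) :
    f n (C.castX h x) = D.castX h (f m x) := by
  subst h; rfl

theorem DD_pt (C : PreCC) (n : ℤ) (z : C.X (n + 1)) :
    DD C n z = C.pt n ↔ C.d (n + 1) z = C.pt (n + 1 - 1) := castX_pt _ _ _

theorem DD_inj (C : PreCC) (hC : C.IsComplex) (n : ℤ) (a b : C.X (n + 1))
    (h : DD C n a = DD C n b) (h' : DD C n a ≠ C.pt n) : a = b :=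
  hC.2.1 _ _ _ ((castX_inj _ _ _ _).1 h) (fun h2 => h' ((DD_pt _ _ _).2 h2))

theorem DD_f (C D : PreCC) (f : ∀ n, C.X n → D.X n) (hf : IsChainMap C D f) (n : ℤ)
    (x : C.X (n + 1)) : f n (DD C n x) = DD D n (f (n + 1) x) := by
  unfold DD
  rw [castX_f C D f, hf.2.2]

theorem d_DD (C : PreCC) (hC : C.IsComplex) (n : ℤ) (x : C.X (n + 1)) :
    C.d n (DD C n x) = C.pt (n - 1) := castX_d C hC _ _

theorem DD_DD (C : PreCC) (hC : C.IsComplex) (n : ℤ) (x : C.X (n + 1 + 1)) :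
    DD C n (DD C (n + 1) x) = C.pt n := (DD_pt _ _ _).2 (d_DD C hC _ _)

theorem Hmem_iff (C : PreCC) (n : ℤ) (x : C.X n) : Hmem C n x ↔
    (x = C.pt n ∨ (x ≠ C.pt n ∧ C.d n x = C.pt (n - 1) ∧ ∀ z, DD C n z ≠ x)) := Iff.rfl

open Classical in
/-- The cokernel complex. -/
noncomputable def Qc (Y : PreCC) {X : PreCC} (f : ∀ n, X.X n → Y.X n) : PreCC :=
      ⟨fun n => {y : Y.X n // y = Y.pt n ∨ y ∉ Set.range (f n)},
       fun n => ⟨Y.pt n, Or.inl rfl⟩,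
       fun n y =>
         if h : Y.d n y.1 ∈ Set.range (f (n - 1)) then ⟨Y.pt (n - 1), Or.inl rfl⟩
         else ⟨Y.d n y.1, Or.inr h⟩⟩

/-- Underlying element. -/
def Qv {X Y : PreCC} {f : ∀ n, X.X n → Y.X n} {n : ℤ} (q : (Qc Y f).X n) : Y.X n :=
  Subtype.val q

theorem Qv_inj {X Y : PreCC} {f : ∀ n, X.X n → Y.X n} {n : ℤ} {q r : (Qc Y f).X n} :
    Qv q = Qv r ↔ q = r := ⟨fun h => Subtype.ext h, fun h => h ▸ rfl⟩

theorem Qv_pt {X Y : PreCC} {f : ∀ n, X.X n → Y.X n} {n : ℤ} :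
    Qv ((Qc Y f).pt n) = Y.pt n := rfl

theorem Qv_prop {X Y : PreCC} {f : ∀ n, X.X n → Y.X n} {n : ℤ} (q : (Qc Y f).X n) :
    Qv q = Y.pt n ∨ Qv q ∉ Set.range (f n) := q.2

theorem Qv_d1 {X Y : PreCC} {f : ∀ n, X.X n → Y.X n} {n : ℤ} (q : (Qc Y f).X n)
    (h : Y.d n (Qv q) ∈ Set.range (f (n - 1))) : Qv ((Qc Y f).d n q) = Y.pt (n - 1) := by
  have : (Qc Y f).d n q = (Qc Y f).pt (n - 1) := dif_pos h
  rw [this]; rfl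

theorem Qv_d2 {X Y : PreCC} {f : ∀ n, X.X n → Y.X n} {n : ℤ} (q : (Qc Y f).X n)
    (h : Y.d n (Qv q) ∉ Set.range (f (n - 1))) : Qv ((Qc Y f).d n q) = Y.d n (Qv q) := by
  have : (Qc Y f).d n q = ⟨Y.d n (Qv q), Or.inr h⟩ := dif_neg h
  rw [this]; rfl

theorem Qv_cast {X Y : PreCC} {f : ∀ n, X.X n → Y.X n} {m n : ℤ} (h : m = n)
    (q : (Qc Y f).X m) : Qv ((Qc Y f).castX h q) = Y.castX h (Qv q) := by
  subst h; rfl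

theorem range_cast {X Y : PreCC} {f : ∀ n, X.X n → Y.X n} {m n : ℤ} (h : m = n)
    (y : Y.X m) : Y.castX h y ∈ Set.range (f n) ↔ y ∈ Set.range (f m) := by
  subst h; exact Iff.rfl

theorem Qv_DD1 {X Y : PreCC} {f : ∀ n, X.X n → Y.X n} {n : ℤ} (q : (Qc Y f).X (n + 1))
    (h : DD Y n (Qv q) ∈ Set.range (f n)) : Qv (DD (Qc Y f) n q) = Y.pt n := by
  unfold DD at *
  rw [Qv_cast, Qv_d1 _ ((range_cast _ _).1 h), castX_pt]

theorem Qv_DD2 {X Y : PreCC} {f : ∀ n, X.X n → Y.X n} {n : ℤ} (q : (Qc Y f).X (n + 1))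
    (h : DD Y n (Qv q) ∉ Set.range (f n)) : Qv (DD (Qc Y f) n q) = DD Y n (Qv q) := by
  unfold DD at *
  rw [Qv_cast, Qv_d2 _ (fun h' => h ((range_cast _ _).2 h'))]

theorem Qc_isComplex (X Y : PreCC) (hY : Y.IsComplex)
    (f : ∀ n, X.X n → Y.X n) (hf : IsChainMap X Y f) : (Qc Y f).IsComplex := by
  have hr : ∀ n, Y.pt n ∈ Set.range (f n) := fun n => ⟨_, hf.1 n⟩
  refine ⟨fun n => ?_, fun n a b h h' => ?_, fun n x => ?_⟩
  · rw [← Qv_inj, Qv_pt]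
    apply Qv_d1
    rw [Qv_pt, hY.1]; exact hr _
  · rw [← Qv_inj] at h ⊢
    rw [Ne, ← Qv_inj, Qv_pt] at h'
    by_cases ha : Y.d n (Qv a) ∈ Set.range (f (n - 1))
    · exact absurd (Qv_d1 _ ha) h'
    by_cases hb : Y.d n (Qv b) ∈ Set.range (f (n - 1))
    · exact absurd (h.trans (Qv_d1 _ hb)) h'
    rw [Qv_d2 _ ha] at h h'
    rw [Qv_d2 _ hb] at h
    exact hY.2.1 _ _ _ h h'
  · rw [← Qv_inj, Qv_pt]
    apply Qv_d1
    by_cases ha : Y.d n (Qv x) ∈ Set.range (f (n - 1))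
    · rw [Qv_d1 _ ha, hY.1]; exact hr _
    · rw [Qv_d2 _ ha, hY.2.2]; exact hr _

theorem Hmem_f (X Y : PreCC) (hY : Y.IsComplex)
    (f : ∀ n, X.X n → Y.X n) (hf : IsChainMap X Y f)
    (hfinj : ∀ n, Function.Injective (f n)) (hQ : (Qc Y f).Exact) (n : ℤ) (x : X.X n)
    (hx : Hmem X n x) : Hmem Y n (f n x) := by
  rw [Hmem_iff] at hx ⊢
  rcases hx with rfl | ⟨h1, h2, h3⟩
  · exact Or.inl (hf.1 n)
  have hne : f n x ≠ Y.pt n := fun h => h1 (hfinj n (h.trans (hf.1 n).symm))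
  refine Or.inr ⟨hne, ?_, fun z hz => ?_⟩
  · rw [← hf.2.2, h2, hf.1]
  by_cases hzr : z ∈ Set.range (f (n + 1))
  · obtain ⟨w, rfl⟩ := hzr
    rw [← DD_f X Y f hf] at hz
    exact h3 w (hfinj n hz)
  let q : (Qc Y f).X (n + 1) := ⟨z, Or.inr hzr⟩
  have hq : Qv q = z := rfl
  have hzp : z ≠ Y.pt (n + 1) := fun h => hzr ⟨_, (hf.1 _).trans h.symm⟩
  have hqp : q ≠ (Qc Y f).pt (n + 1) := fun h => hzp (by rw [← hq, h, Qv_pt])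
  apply hqp
  apply hQ
  rw [Hmem_iff]
  refine Or.inr ⟨hqp, ?_, fun w hw => ?_⟩
  · rw [← DD_pt, ← Qv_inj, Qv_pt]
    apply Qv_DD1
    rw [hq, hz]; exact ⟨x, rfl⟩
  · rw [← Qv_inj, hq] at hw
    by_cases hr : DD Y (n + 1) (Qv w) ∈ Set.range (f (n + 1))
    · exact hzp (hw.symm.trans (Qv_DD1 _ hr))
    · rw [Qv_DD2 _ hr] at hw
      apply hne
      rw [← hz, ← hw, DD_DD Y hY]

theorem bij_of_exact (X Y : PreCC) (hY : Y.IsComplex)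
    (f : ∀ n, X.X n → Y.X n) (hf : IsChainMap X Y f)
    (hfinj : ∀ n, Function.Injective (f n)) (hQ : (Qc Y f).Exact) (n : ℤ) :
    Function.Bijective (Hmap X Y f n) := by
  have hv : ∀ x : HT X n, Hmap X Y f n x = ⟨f n x.1, Hmem_f X Y hY f hf hfinj hQ n x.1 x.2⟩ :=
    fun x => dif_pos _
  constructor
  · intro a b h
    rw [hv, hv] at h
    exact Subtype.ext (hfinj n (congrArg Subtype.val h))
  · rintro ⟨y, hy⟩
    have hy' := (Hmem_iff _ _ _).1 hy
    have key : ∃ x, f n x = y := by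
      rcases hy' with h | ⟨h1, h2, h3⟩
      · exact ⟨_, (hf.1 n).trans h.symm⟩
      by_contra hyr
      have hyr : y ∉ Set.range (f n) := hyr
      let q : (Qc Y f).X n := ⟨y, Or.inr hyr⟩
      have hq : Qv q = y := rfl
      have hqp : q ≠ (Qc Y f).pt n := fun h => h1 (by rw [← hq, h, Qv_pt])
      apply hqp
      apply hQ
      rw [Hmem_iff]
      refine Or.inr ⟨hqp, ?_, fun w hw => ?_⟩
      · rw [← Qv_inj, Qv_pt]
        apply Qv_d1
        rw [hq, h2]; exact ⟨_, hf.1 _⟩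
      · rw [← Qv_inj, hq] at hw
        by_cases hr : DD Y n (Qv w) ∈ Set.range (f n)
        · exact h1 (hw.symm.trans (Qv_DD1 _ hr))
        · rw [Qv_DD2 _ hr] at hw
          exact h3 _ hw
    obtain ⟨x, rfl⟩ := key
    have hx : Hmem X n x := by
      rw [Hmem_iff]
      rcases hy' with h | ⟨h1, h2, h3⟩
      · exact Or.inl (hfinj n (h.trans (hf.1 n).symm))
      refine Or.inr ⟨fun h => h1 (h ▸ hf.1 n), ?_, fun w hw => ?_⟩
      · apply hfinj
        rw [hf.2.2, h2, hf.1]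
      · apply h3 (f (n + 1) w)
        rw [← DD_f X Y f hf, hw]
    exact ⟨⟨x, hx⟩, hv _⟩

theorem exact_of_bij (X Y : PreCC) (hY : Y.IsComplex)
    (f : ∀ n, X.X n → Y.X n) (hf : IsChainMap X Y f)
    (hfinj : ∀ n, Function.Injective (f n))
    (hb : ∀ n, Function.Bijective (Hmap X Y f n)) : (Qc Y f).Exact := by
  intro m q hq
  obtain ⟨n, rfl⟩ : ∃ n, m = n + 1 := ⟨m - 1, by omega⟩
  rw [Hmem_iff] at hq
  rcases hq with hq | ⟨h1, h2, h3⟩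
  · exact hq
  exfalso
  have hqp : Qv q ≠ Y.pt (n + 1) := fun h => h1 (Qv_inj.1 h)
  have hqr : Qv q ∉ Set.range (f (n + 1)) := (Qv_prop q).resolve_left hqp
  rw [← DD_pt, ← Qv_inj, Qv_pt] at h2
  have hDr : DD Y n (Qv q) ∈ Set.range (f n) := by
    by_contra h
    rw [Qv_DD2 _ h] at h2
    exact h ⟨_, (hf.1 n).trans h2.symm⟩
  obtain ⟨b, hbq⟩ := hDr
  have hbpt : b = X.pt n := by
    by_contra hbne
    have hfb : f n b ≠ Y.pt n := fun h => hbne (hfinj n (h.trans (hf.1 n).symm))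
    have hbH : Hmem X n b := by
      rw [Hmem_iff]
      refine Or.inr ⟨hbne, ?_, fun a ha => ?_⟩
      · apply hfinj
        rw [hf.2.2, hbq, d_DD Y hY, hf.1]
      · apply hqr
        refine ⟨a, DD_inj Y hY n _ _ ?_ ?_⟩
        · rw [← DD_f X Y f hf, ha, hbq]
        · rw [← DD_f X Y f hf, ha]; exact hfb
    have hnot : ¬ Hmem Y n (f n b) := by
      rw [Hmem_iff]
      rintro (h | ⟨_, _, h⟩)
      · exact hfb h
      · exact h _ hbq.symm
    have e1 : Hmap X Y f n ⟨b, hbH⟩ = Hpt Y n := dif_neg hnot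
    have e2 : Hmap X Y f n (Hpt X n) = Hpt Y n := by
      have h : Hmem Y n (f n (X.pt n)) := Or.inl (hf.1 n)
      have : Hmap X Y f n (Hpt X n) = ⟨f n (X.pt n), h⟩ := dif_pos h
      rw [this]; exact Subtype.ext (hf.1 n)
    exact hbne (congrArg Subtype.val ((hb n).1 (e1.trans e2.symm)))
  have hH : Hmem Y (n + 1) (Qv q) := by
    rw [Hmem_iff]
    refine Or.inr ⟨hqp, ?_, fun w hw => ?_⟩
    · rw [← DD_pt, ← hbq, hbpt, hf.1]
    · have hwr : w ∉ Set.range (f (n + 1 + 1)) := by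
        rintro ⟨v, rfl⟩
        exact hqr ⟨_, (DD_f X Y f hf _ v).trans hw⟩
      obtain ⟨r, hr⟩ : ∃ r : (Qc Y f).X (n + 1 + 1), Qv r = w := ⟨⟨w, Or.inr hwr⟩, rfl⟩
      apply h3 r
      rw [← Qv_inj, Qv_DD2]
      · rw [hr, hw]
      · rw [hr, hw]; exact hqr
  obtain ⟨x, hx⟩ := (hb (n + 1)).2 ⟨Qv q, hH⟩
  by_cases h : Hmem Y (n + 1) (f (n + 1) x.1)
  · have e : Hmap X Y f (n + 1) x = ⟨f (n + 1) x.1, h⟩ := dif_pos h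
    exact hqr ⟨x.1, congrArg Subtype.val (e.symm.trans hx)⟩
  · have e : Hmap X Y f (n + 1) x = Hpt Y (n + 1) := dif_neg h
    exact hqp (congrArg Subtype.val (hx.symm.trans e))

open Classical in
/-- For a levelwise injective chain map `f : X → Y` of chain complexes of pointed sets,
the cokernel complex `Q`, with `Qₙ = (Yₙ \ fₙ(Xₙ)) ∪ {∗}` and differential
`d(y) = dʸ(y)` if `dʸ(y) ∉ fₙ₋₁(Xₙ₋₁)` and `d(y) = ∗` otherwise, is a chain complex of
pointed sets, and `f` is a quasi-isomorphism if and only if `Q` is exact. -/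
theorem stmt10 (X Y : PreCC) (hX : X.IsComplex) (hY : Y.IsComplex)
    (f : ∀ n, X.X n → Y.X n) (hf : IsChainMap X Y f)
    (hfinj : ∀ n, Function.Injective (f n)) :
    let Q : PreCC :=
      ⟨fun n => {y : Y.X n // y = Y.pt n ∨ y ∉ Set.range (f n)},
       fun n => ⟨Y.pt n, Or.inl rfl⟩,
       fun n y =>
         if h : Y.d n y.1 ∈ Set.range (f (n - 1)) then ⟨Y.pt (n - 1), Or.inl rfl⟩
         else ⟨Y.d n y.1, Or.inr h⟩⟩
    Q.IsComplex ∧ ((∀ n, Function.Bijective (Hmap X Y f n)) ↔ Q.Exact) := by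
  intro Q
  exact ⟨Qc_isComplex X Y hY f hf, exact_of_bij X Y hY f hf hfinj,
    fun hQ n => bij_of_exact X Y hY f hf hfinj hQ n⟩
end
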